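/- arXiv:2206.03176 — 2 statements merged into one kernel-verified Lean document; each statement's English description precedes it below -/
import Mathlib

section
/- Let (X,r) be a non-degenerate involutive set-theoretic solution with |X| = n finite, of class m, with structure group G(X,r), bijective 1-cocycle π, frozen elements θ_x, and N the subgroup of G(X,r) generated by {θ_x : x ∈ X}. Then N is a normal subgroup of G(X,r), N is free abelian of rank n, and the quotient group G(X,r)/N is finite of order m^n. -/
open scoped BigOperators

section YB

variable {X : Type*}

/-- `r¹² = r × id` acting on the first two components of `X³`. -/
def r12 (r : X × X → X × X) : X × X × X → X × X × X :=
  fun p => ((r (p.1, p.2.1)).1, (r (p.1, p.2.1)).2, p.2.2)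

/-- `r²³ = id × r` acting on the last two components of `X³`. -/
def r23 (r : X × X → X × X) : X × X × X → X × X × X :=
  fun p => (p.1, r (p.2.1, p.2.2))

/-- A set-theoretic solution of the Yang–Baxter equation: a bijection
`r : X × X → X × X` satisfying the braid relation `r¹² r²³ r¹² = r²³ r¹² r²³`. -/
structure YBSol (X : Type*) where
  r : X × X → X × X
  bij : Function.Bijective r
  braid : r12 r ∘ r23 r ∘ r12 r = r23 r ∘ r12 r ∘ r23 r

namespace YBSol

variable (S : YBSol X)

/-- `σ_x(y)`, the first component of `r(x,y)`. -/
def σ (x y : X) : X := (S.r (x, y)).1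

/-- `γ_y(x)`, the second component of `r(x,y)`. -/
def γ (y x : X) : X := (S.r (x, y)).2

/-- Non-degeneracy: all the maps `σ_x` and `γ_y` are bijections of `X`. -/
def NonDeg : Prop :=
  (∀ x, Function.Bijective (S.σ x)) ∧ (∀ y, Function.Bijective (S.γ y))

/-- Involutivity: `r ∘ r = id`. -/
def Invol : Prop := S.r ∘ S.r = id

/-- The defining relations `x·y = σ_x(y)·γ_y(x)` of the structure group. -/
def rels : Set (FreeGroup X) :=
  { w | ∃ x y : X,
      w = FreeGroup.of x * FreeGroup.of y *
        (FreeGroup.of (S.σ x y) * FreeGroup.of (S.γ y x))⁻¹ }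

/-- The structure group `G(X,r) = Gp⟨X ∣ x·y = σ_x(y)·γ_y(x)⟩`. -/
abbrev G := PresentedGroup S.rels

/-- The image of a generator `x ∈ X` in the structure group. -/
def gen (x : X) : S.G := PresentedGroup.of x

end YBSol

/-- `sigIter S D k x` is the composite `σ_x ∘ σ_{D(x)} ∘ ⋯ ∘ σ_{D^{k-1}(x)}`. -/
def sigIter (S : YBSol X) (D : X → X) : ℕ → X → X → X
  | 0, _ => id
  | k + 1, x => S.σ x ∘ sigIter S D k (D x)

end YB

/-!
Elements acting trivially on `ℤ^X` are multiplied additively by the cocycle `π`, and conjugating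
them by `g` amounts to acting by `g`. The relation `σ_x(D(x)) = x` makes the cocycle telescope to
`π(θ_x) = m t_x`, while class `m` says that `θ_x` acts trivially. Hence `g θ_x g⁻¹ = θ_{φ(g)(x)}`,
which gives normality, and `π` identifies `N` with `m ℤ^X ≅ ℤ^X` and the right cosets of `N` with
the cosets of `m ℤ^X`.
-/

open groupCohomology

section Cocycle

variable {G A : Type*} [Group G] [AddCommGroup A] [DistribMulAction G A] {π : G → A}

theorem cocycle_mul_of_mem_ker (hπ : IsCocycle₁ π) {g : G}
    (hg : g ∈ (MulAction.toPermHom G A).ker) (h : G) : π (g * h) = π g + π h := by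
  have hsmul : g • π h = π h := DFunLike.congr_fun hg (π h)
  rw [hπ, hsmul, add_comm]

theorem cocycle_conj_of_mem_ker (hπ : IsCocycle₁ π) {h : G}
    (hh : h ∈ (MulAction.toPermHom G A).ker) (g : G) : π (g * h * g⁻¹) = g • π h := by
  have hconj : g * h * g⁻¹ ∈ (MulAction.toPermHom G A).ker :=
    (MonoidHom.normal_ker _).conj_mem h hh g
  refine add_right_cancel (b := π g) ?_
  rw [← cocycle_mul_of_mem_ker hπ hconj, inv_mul_cancel_right, hπ]

/-- The restriction of a 1-cocycle to a subgroup acting trivially, where it is a homomorphism. -/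
def cocycleHom (hπ : IsCocycle₁ π) {N : Subgroup G} (hN : N ≤ (MulAction.toPermHom G A).ker) :
    Additive N →+ A where
  toFun g := π g.toMul
  map_zero' := map_one_of_isCocycle₁ hπ
  map_add' g h := cocycle_mul_of_mem_ker hπ (hN g.toMul.2) h.toMul

theorem mem_range_cocycleHom (hπ : IsCocycle₁ π) {N : Subgroup G}
    (hN : N ≤ (MulAction.toPermHom G A).ker) {a : A} :
    a ∈ (cocycleHom hπ hN).range ↔ ∃ g ∈ N, π g = a :=
  ⟨fun ⟨g, hg⟩ ↦ ⟨g.toMul, g.toMul.2, hg⟩, fun ⟨g, hgN, hg⟩ ↦ ⟨.ofMul ⟨g, hgN⟩, hg⟩⟩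

theorem cocycleHom_injective (hπ : IsCocycle₁ π) {N : Subgroup G}
    (hN : N ≤ (MulAction.toPermHom G A).ker) (hinj : Function.Injective π) :
    Function.Injective (cocycleHom hπ hN) :=
  hinj.comp (Subtype.val_injective.comp Additive.toMul.injective)

theorem range_cocycleHom_closure (hπ : IsCocycle₁ π) {s : Set G}
    (hs : Subgroup.closure s ≤ (MulAction.toPermHom G A).ker) :
    (cocycleHom hπ hs).range = AddSubgroup.closure (π '' s) := by
  apply le_antisymm
  · rintro _ ⟨g, rfl⟩
    obtain ⟨g, hg⟩ := g
    change π g ∈ _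
    induction hg using Subgroup.closure_induction with
    | mem g hg => exact AddSubgroup.subset_closure ⟨g, hg, rfl⟩
    | one => exact map_one_of_isCocycle₁ hπ ▸ zero_mem _
    | mul g h hg _ ihg ihh => exact cocycle_mul_of_mem_ker hπ (hs hg) h ▸ add_mem ihg ihh
    | inv g hg ih =>
      have hneg : π g⁻¹ = -π g := map_neg (cocycleHom hπ hs) (.ofMul ⟨g, hg⟩)
      exact hneg ▸ neg_mem ih
  · rw [AddSubgroup.closure_le]
    rintro _ ⟨g, hg, rfl⟩
    exact (mem_range_cocycleHom hπ hs).2 ⟨g, Subgroup.subset_closure hg, rfl⟩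

theorem mul_inv_mem_iff_sub_mem_range_cocycleHom (hπ : IsCocycle₁ π) {N : Subgroup G}
    (hN : N ≤ (MulAction.toPermHom G A).ker) (hinj : Function.Injective π) (g h : G) :
    h * g⁻¹ ∈ N ↔ π h - π g ∈ (cocycleHom hπ hN).range := by
  rw [mem_range_cocycleHom]
  constructor
  · intro hmem
    refine ⟨h * g⁻¹, hmem, eq_sub_of_add_eq ?_⟩
    rw [← cocycle_mul_of_mem_ker hπ (hN hmem), inv_mul_cancel_right]
  · rintro ⟨n, hn, hπn⟩
    have hnh : n * g = h := hinj <| by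
      rw [cocycle_mul_of_mem_ker hπ (hN hn), hπn, sub_add_cancel]
    rwa [← hnh, mul_inv_cancel_right]

/-- The bijection of coset spaces induced by a bijective 1-cocycle. The cocycle respects right
cosets, whereas `G ⧸ N` consists of left cosets, so the map involves an inversion. -/
noncomputable def quotientEquivQuotientRangeCocycleHom (hπ : IsCocycle₁ π) {N : Subgroup G}
    (hN : N ≤ (MulAction.toPermHom G A).ker) (hbij : Function.Bijective π) :
    G ⧸ N ≃ A ⧸ (cocycleHom hπ hN).range :=
  (QuotientGroup.quotientRightRelEquivQuotientLeftRel N).symm.trans <|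
    Quotient.congr (Equiv.ofBijective π hbij) fun g h ↦ by
      rw [QuotientGroup.rightRel_apply, QuotientAddGroup.leftRel_apply,
        mul_inv_mem_iff_sub_mem_range_cocycleHom hπ hN hbij.injective, neg_add_eq_sub,
        Equiv.ofBijective_apply, Equiv.ofBijective_apply]

end Cocycle

section Multiples

variable {ι G A : Type*} [Group G] [AddCommGroup A]

theorem closure_range_smul_of_span_eq_top {b : ι → A} (hb : Submodule.span ℤ (Set.range b) = ⊤)
    (m : ℤ) :
    AddSubgroup.closure (Set.range fun i ↦ m • b i) =
      (LinearMap.range (LinearMap.lsmul ℤ A m)).toAddSubgroup := by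
  rw [← Submodule.span_int_eq_addSubgroupClosure, LinearMap.range_eq_map, ← hb,
    Submodule.map_span, ← Set.range_comp]
  rfl

variable [DistribMulAction G A] {π : G → A} {b : ι → A} {m : ℕ} {θ : ι → G}

theorem range_cocycleHom_closure_eq_range_lsmul (hπ : IsCocycle₁ π)
    (hb : Submodule.span ℤ (Set.range b) = ⊤) (hθ : ∀ i, π (θ i) = (m : ℤ) • b i)
    (hN : Subgroup.closure (Set.range θ) ≤ (MulAction.toPermHom G A).ker) :
    (cocycleHom hπ hN).range =
      (LinearMap.range (LinearMap.lsmul ℤ A (m : ℤ))).toAddSubgroup := by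
  rw [range_cocycleHom_closure, ← closure_range_smul_of_span_eq_top hb, ← Set.range_comp]
  exact congrArg _ (congrArg Set.range (funext hθ))

theorem nonempty_closure_mulEquiv [IsAddTorsionFree A] (hπ : IsCocycle₁ π)
    (hinj : Function.Injective π) (hb : Submodule.span ℤ (Set.range b) = ⊤) (hm : m ≠ 0)
    (hθ : ∀ i, π (θ i) = (m : ℤ) • b i)
    (hN : Subgroup.closure (Set.range θ) ≤ (MulAction.toPermHom G A).ker) :
    Nonempty (Subgroup.closure (Set.range θ) ≃* Multiplicative A) := by
  have hsmul : Function.Injective (LinearMap.lsmul ℤ A (m : ℤ)) :=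
    zsmul_right_injective (Int.natCast_ne_zero.2 hm)
  exact ⟨AddEquiv.toMultiplicativeRight <|
    (AddMonoidHom.ofInjective (cocycleHom_injective hπ hN hinj)).trans <|
      (AddEquiv.addSubgroupCongr (range_cocycleHom_closure_eq_range_lsmul hπ hb hθ hN)).trans
        (LinearEquiv.ofInjective _ hsmul).symm.toAddEquiv⟩

theorem nonempty_quotient_closure_equiv_modN (hπ : IsCocycle₁ π) (hbij : Function.Bijective π)
    (hb : Submodule.span ℤ (Set.range b) = ⊤) (hθ : ∀ i, π (θ i) = (m : ℤ) • b i)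
    (hN : Subgroup.closure (Set.range θ) ≤ (MulAction.toPermHom G A).ker) :
    Nonempty (G ⧸ Subgroup.closure (Set.range θ) ≃ ModN A m) :=
  ⟨(quotientEquivQuotientRangeCocycleHom hπ hN hbij).trans <|
    (QuotientAddGroup.quotientAddEquivOfEq
      (range_cocycleHom_closure_eq_range_lsmul hπ hb hθ hN)).toEquiv⟩

end Multiples

section PermutationModule

attribute [local instance] Finsupp.comapSMul Finsupp.comapMulAction Finsupp.comapDistribMulAction

variable {X G : Type*} [Group G] [MulAction G X]

theorem ker_toPermHom_le_ker_toPermHom_finsupp (M : Type*) [AddCommMonoid M] :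
    (MulAction.toPermHom G X).ker ≤ (MulAction.toPermHom G (X →₀ M)).ker := by
  intro g hg
  ext1 v
  have hid : (g • · : X → X) = id := funext (DFunLike.congr_fun hg)
  change Finsupp.mapDomain (g • ·) v = v
  rw [hid, Finsupp.mapDomain_id]

theorem normal_closure_range_of_cocycle_single {M : Type*} [AddCommGroup M] {π : G → X →₀ M}
    (hπ : IsCocycle₁ π) (hinj : Function.Injective π) {θ : X → G} {c : M}
    (hθ : ∀ x, π (θ x) = Finsupp.single x c)
    (hker : ∀ x, θ x ∈ (MulAction.toPermHom G X).ker) :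
    (Subgroup.closure (Set.range θ)).Normal := by
  have hconj : ∀ g x, g * θ x * g⁻¹ = θ (g • x) := fun g x ↦ hinj <| by
    rw [cocycle_conj_of_mem_ker hπ (ker_toPermHom_le_ker_toPermHom_finsupp M (hker x)), hθ, hθ,
      Finsupp.comapSMul_single]
  rw [← Subgroup.normalizer_eq_top_iff, ← top_le_iff, Subgroup.le_normalizer_closure_iff]
  rintro g - _ ⟨x, rfl⟩
  exact hconj g x ▸ Subgroup.subset_closure (Set.mem_range_self _)

end PermutationModule

namespace YBSol

variable {X : Type*} (S : YBSol X) (D : X → X)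

/-- The frozen element `x · D(x) ⋯ D^{k-1}(x)` of length `k` starting with `x`. -/
def frozen (k : ℕ) (x : X) : S.G :=
  ((List.range k).map fun i ↦ S.gen (D^[i] x)).prod

theorem frozen_succ (k : ℕ) (x : X) : S.frozen D (k + 1) x = S.gen x * S.frozen D k (D x) := by
  simp [frozen, List.range_succ_eq_map, Function.comp_def]

variable {S D}

theorem map_frozen_apply {φ : S.G →* Equiv.Perm X} (hφ : ∀ x y, φ (S.gen x) y = S.σ x y)
    (k : ℕ) (x y : X) : φ (S.frozen D k x) y = sigIter S D k x y := by
  induction k generalizing x with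
  | zero => simp [frozen, sigIter]
  | succ k ih => simp [frozen_succ, sigIter, ih, hφ]

theorem cocycle_frozen {φ : S.G →* Equiv.Perm X} (hφ : ∀ x y, φ (S.gen x) y = S.σ x y)
    {π : S.G → X →₀ ℤ} (hπgen : ∀ x, π (S.gen x) = Finsupp.single x 1)
    (hπcoc : ∀ g h, π (g * h) = π g + Finsupp.mapDomain (φ g) (π h))
    (hD : ∀ x, S.σ x (D x) = x) (k : ℕ) (x : X) :
    π (S.frozen D k x) = Finsupp.single x (k : ℤ) := by
  induction k generalizing x with
  | zero =>
    have hone : π 1 = 0 := by simpa [Finsupp.mapDomain_id] using hπcoc 1 1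
    simpa [frozen] using hone
  | succ k ih =>
    rw [frozen_succ, hπcoc, hπgen, ih, Finsupp.mapDomain_single, hφ, hD, ← Finsupp.single_add,
      Nat.cast_succ, add_comm]

end YBSol

theorem N_normal_free_abelian_index_general {X : Type*} (S : YBSol X)
    (φ : S.G →* Equiv.Perm X) (hφ : ∀ x y : X, φ (S.gen x) y = S.σ x y)
    (π : S.G → (X →₀ ℤ)) (hπbij : Function.Bijective π)
    (hπgen : ∀ x : X, π (S.gen x) = Finsupp.single x 1)
    (hπcoc : ∀ g h : S.G, π (g * h) = π g + Finsupp.mapDomain (⇑(φ g)) (π h))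
    (D : X → X) (hD : ∀ x, S.σ x (D x) = x)
    (m : ℕ) [NeZero m] (hm : ∀ x y : X, sigIter S D m x y = y) :
    (Subgroup.closure (Set.range (S.frozen D m))).Normal ∧
    Nonempty (Subgroup.closure (Set.range (S.frozen D m)) ≃* Multiplicative (X →₀ ℤ)) ∧
    Nonempty (S.G ⧸ Subgroup.closure (Set.range (S.frozen D m)) ≃ (X →₀ ZMod m)) := by
  let _ : MulAction S.G X := MulAction.compHom X φ
  let _ : DistribMulAction S.G (X →₀ ℤ) := Finsupp.comapDistribMulAction
  have hπ : IsCocycle₁ π := fun g h ↦ (hπcoc g h).trans (add_comm _ _)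
  have hfrozen : ∀ x, π (S.frozen D m x) = Finsupp.single x (m : ℤ) :=
    YBSol.cocycle_frozen hφ hπgen hπcoc hD m
  have hbasis : ∀ x, π (S.frozen D m x) = (m : ℤ) • Finsupp.basisSingleOne x := by simp [hfrozen]
  have hker : ∀ x, S.frozen D m x ∈ (MulAction.toPermHom S.G X).ker := fun x ↦
    Equiv.ext fun y ↦ (YBSol.map_frozen_apply hφ m x y).trans (hm x y)
  have hN : Subgroup.closure (Set.range (S.frozen D m)) ≤
      (MulAction.toPermHom S.G (X →₀ ℤ)).ker :=
    (Subgroup.closure_le _).2 <| Set.range_subset_iff.2 fun x ↦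
      ker_toPermHom_le_ker_toPermHom_finsupp ℤ (hker x)
  have hspan := (Finsupp.basisSingleOne (R := ℤ) (ι := X)).span_eq
  obtain ⟨e⟩ := nonempty_quotient_closure_equiv_modN hπ hπbij hspan hbasis hN
  exact ⟨normal_closure_range_of_cocycle_single hπ hπbij.injective hfrozen hker,
    nonempty_closure_mulEquiv hπ hπbij.injective hspan (NeZero.ne m) hbasis hN,
    ⟨e.trans (ModN.basis Finsupp.basisSingleOne).repr.toEquiv⟩⟩

/-- The subgroup `N` generated by the frozen elements is normal, free abelian of rank
`n = |X|`, and the quotient `G(X,r)/N` is finite of order `m^n`. -/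
theorem N_normal_free_abelian_index {X : Type*} [Fintype X] (S : YBSol X)
    (hnd : S.NonDeg) (hinv : S.Invol)
    (φ : S.G →* Equiv.Perm X) (hφ : ∀ x y : X, φ (S.gen x) y = S.σ x y)
    (π : S.G → (X →₀ ℤ)) (hπbij : Function.Bijective π)
    (hπgen : ∀ x : X, π (S.gen x) = Finsupp.single x 1)
    (hπcoc : ∀ g h : S.G, π (g * h) = π g + Finsupp.mapDomain (⇑(φ g)) (π h))
    (D : X → X) (hD : ∀ x, S.σ x (D x) = x)
    (m : ℕ) (hm1 : 1 ≤ m) (hm : ∀ x y : X, sigIter S D m x y = y)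
    (θ : X → S.G)
    (hθ : ∀ x : X, θ x = (((List.range m).map fun i => S.gen (D^[i] x)).prod)) :
    (Subgroup.closure (Set.range θ)).Normal ∧
    Nonempty (↥(Subgroup.closure (Set.range θ)) ≃*
      Multiplicative (Fin (Fintype.card X) → ℤ)) ∧
    (Subgroup.closure (Set.range θ)).index = m ^ Fintype.card X := by
  have : NeZero m := ⟨Nat.one_le_iff_ne_zero.1 hm1⟩
  obtain rfl : θ = S.frozen D m := funext hθ
  obtain ⟨hnormal, ⟨e⟩, ⟨f⟩⟩ :=
    N_normal_free_abelian_index_general S φ hφ π hπbij hπgen hπcoc D hD m hm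
  let b := (Finsupp.basisSingleOne (R := ℤ)).reindex (Fintype.equivFin X)
  exact ⟨hnormal, ⟨e.trans b.equivFun.toAddEquiv.toMultiplicative⟩, by
    classical simp [Subgroup.index, Nat.card_congr f, Nat.card_eq_fintype_card]⟩
end

section
/- Let (X,r) be a non-degenerate involutive set-theoretic solution with X = {x_1,…,x_n} finite, of class m, with structure group G(X,r), maps φ and π, matrix representation ψ : G(X,r) → GL_{n+1}(ℝ), and frozen elements θ_{x_k}. Let T ⊆ G(X,r) be a set of coset representatives for Ker(φ) in G(X,r) (exactly one element per coset) with 1 ∈ T. Then the ℝ-linear span of {ψ(g) : g ∈ G(X,r)} in M_{n+1}(ℝ) equals the ℝ-linear span of {ψ(θ_{x_k}) : 1 ≤ k ≤ n} ∪ {ψ(v) : v ∈ T}; in particular this span is finite-dimensional of dimension at most n + |φ(G(X,r))|. -/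
open scoped BigOperators

section Mat

/-- The `(n+1) × (n+1)` real matrix with the permutation matrix of `p` in the upper-left
`n × n` block, the vector `v` in the first `n` entries of the last column, and last
row `(0,…,0,1)`. -/
noncomputable def matOf {n : ℕ} (p : Equiv.Perm (Fin n)) (v : Fin n → ℤ) :
    Matrix (Fin (n + 1)) (Fin (n + 1)) ℝ :=
  Matrix.of fun i j =>
    if hi : (i : ℕ) < n then
      if hj : (j : ℕ) < n then (if p ⟨j, hj⟩ = ⟨i, hi⟩ then (1 : ℝ) else 0)
      else ((v ⟨i, hi⟩ : ℤ) : ℝ)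
    else if (j : ℕ) < n then 0 else 1

/-- `E_k`: the `(n+1) × (n+1)` matrix with entry `1` in position `(k, n+1)` and `0` elsewhere. -/
noncomputable def EMat (n : ℕ) (k : Fin n) : Matrix (Fin (n + 1)) (Fin (n + 1)) ℝ :=
  Matrix.single (Fin.castSucc k) (Fin.last n) 1

end Mat

/-!
Matrices `ψ(g)` and `ψ(h)` with `φ(g) = φ(h)` differ only in their last column, hence by a
combination of the matrices `E_k`. The frozen element `θ_k` lies in `Ker(φ)`, and telescoping the
cocycle identity with `σ_x(D(x)) = x` gives `π(θ_k) = m t_k`, so `ψ(θ_k) = ψ(1) + m E_k`. Thus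
every `E_k` lies in the span of `ψ(1)` and the `ψ(θ_k)`, and one representative of each coset of
`Ker(φ)` supplies the remaining directions.
-/

open Set Submodule

section FrozenElement

variable {X G : Type*} [Monoid G]

/-- The frozen element `x · D(x) ⋯ D^{m-1}(x)` of length `m` starting with `x`, formed in any
monoid `G` with a chosen family `gen` of elements indexed by `X`. -/
def frozenElement (gen : X → G) (D : X → X) (m : ℕ) (x : X) : G :=
  ((List.range m).map fun i => gen (D^[i] x)).prod

@[simp]
lemma frozenElement_zero (gen : X → G) (D : X → X) (x : X) : frozenElement gen D 0 x = 1 :=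
  rfl

lemma frozenElement_succ (gen : X → G) (D : X → X) (m : ℕ) (x : X) :
    frozenElement gen D (m + 1) x = gen x * frozenElement gen D m (D x) := by
  simp [frozenElement, List.range_succ_eq_map, Function.comp_def]

/-- `π` is a 1-cocycle with values in `ℤ^X`, on which `G` acts by permuting the basis
through `φ`. -/
def IsPermCocycle (φ : G →* Equiv.Perm X) (π : G → X →₀ ℤ) : Prop :=
  ∀ g h, π (g * h) = π g + (π h).mapDomain (φ g)

namespace IsPermCocycle

variable {φ : G →* Equiv.Perm X} {π : G → X →₀ ℤ}

lemma map_one (hπ : IsPermCocycle φ π) : π 1 = 0 := by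
  simpa using hπ 1 1

lemma map_frozenElement (hπ : IsPermCocycle φ π) {gen : X → G}
    (hgen : ∀ x, π (gen x) = Finsupp.single x 1) {D : X → X} (hD : ∀ x, φ (gen x) (D x) = x)
    (m : ℕ) (x : X) : π (frozenElement gen D m x) = Finsupp.single x (m : ℤ) := by
  induction m generalizing x with
  | zero => simp [hπ.map_one]
  | succ m ih =>
    rw [frozenElement_succ, hπ, hgen, ih, Finsupp.mapDomain_single, hD, ← Finsupp.single_add,
      Nat.cast_succ, add_comm]

end IsPermCocycle

lemma coe_map_frozenElement_eq_sigIter (S : YBSol X) {φ : S.G →* Equiv.Perm X}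
    (hφ : ∀ x y, φ (S.gen x) y = S.σ x y) (D : X → X) (m : ℕ) (x : X) :
    ⇑(φ (frozenElement S.gen D m x)) = sigIter S D m x := by
  induction m generalizing x with
  | zero => simp [sigIter, Equiv.Perm.coe_one]
  | succ m ih =>
    rw [frozenElement_succ, map_mul, Equiv.Perm.coe_mul, ih, funext (hφ x), sigIter]

end FrozenElement

section MatrixSpan

variable {n : ℕ}

lemma matOf_eq_add_sum_EMat (p : Equiv.Perm (Fin n)) (v w : Fin n → ℤ) :
    matOf p v = matOf p w + ∑ k, ((v k : ℝ) - w k) • EMat n k := by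
  ext i j
  cases i using Fin.lastCases <;> cases j using Fin.lastCases <;>
    simp [matOf, EMat, Matrix.sum_apply, Matrix.single_apply, Fin.castSucc_ne_last,
      (Fin.castSucc_ne_last _).symm]

lemma matOf_add_single (p : Equiv.Perm (Fin n)) (v : Fin n → ℤ) (k : Fin n) (c : ℤ) :
    matOf p (v + Pi.single k c) = matOf p v + (c : ℝ) • EMat n k := by
  rw [matOf_eq_add_sum_EMat p _ v, Finset.sum_eq_single k] <;> simp +contextual

variable {W : Submodule ℝ (Matrix (Fin (n + 1)) (Fin (n + 1)) ℝ)} {p : Equiv.Perm (Fin n)}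

lemma matOf_mem_of_EMat_mem (hE : ∀ k, EMat n k ∈ W) {w : Fin n → ℤ} (hw : matOf p w ∈ W)
    (v : Fin n → ℤ) : matOf p v ∈ W := by
  rw [matOf_eq_add_sum_EMat p v w]
  exact W.add_mem hw (W.sum_mem fun k _ => W.smul_mem _ (hE k))

lemma EMat_mem_of_matOf_mem {v : Fin n → ℤ} {k : Fin n} {c : ℤ} (hc : c ≠ 0)
    (hv : matOf p v ∈ W) (hvc : matOf p (v + Pi.single k c) ∈ W) : EMat n k ∈ W := by
  rw [matOf_add_single, W.add_mem_iff_right hv] at hvc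
  exact (W.smul_mem_iff (Int.cast_ne_zero.mpr hc)).mp hvc

end MatrixSpan

lemma finrank_span_range_union_image_le {R V ι κ : Type*} [Ring R] [StrongRankCondition R]
    [AddCommGroup V] [Module R V] [Finite ι] (f : ι → V) (g : κ → V) {T : Set κ}
    (hT : T.Finite) :
    Module.finrank R (span R (range f ∪ g '' T)) ≤ Nat.card ι + T.ncard := by
  have hfin : (range f ∪ g '' T).Finite := (finite_range f).union (hT.image g)
  have := hfin.fintype
  calc Module.finrank R (span R (range f ∪ g '' T))
      ≤ (range f ∪ g '' T).ncard := by
        rw [ncard_eq_toFinset_card']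
        exact finrank_span_le_card _
    _ ≤ (range f).ncard + (g '' T).ncard := ncard_union_le _ _
    _ ≤ Nat.card ι + T.ncard := add_le_add (Finite.card_range_le f) (ncard_image_le hT)

lemma bijOn_range_of_existsUnique {α β : Type*} {f : α → β} {T : Set α}
    (hT : ∀ a, ∃! v, v ∈ T ∧ f v = f a) : BijOn f T (range f) := by
  refine ⟨fun v _ => mem_range_self v, fun v hv w hw hvw => ?_, ?_⟩
  · exact (hT w).unique ⟨hv, hvw⟩ ⟨hw, rfl⟩
  · rintro _ ⟨a, rfl⟩
    exact (hT a).exists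

section Psi

variable {G : Type*} [Monoid G] {n : ℕ} {φ : G →* Equiv.Perm (Fin n)} {π : G → Fin n →₀ ℤ}

/-- The matrix `ψ(g)` attached to a permutation action `φ` and a map `π` into `ℤ^n`. It is
defined for arbitrary `π`; it is multiplicative when `π` is a cocycle for `φ`. -/
noncomputable def psi (φ : G →* Equiv.Perm (Fin n)) (π : G → Fin n →₀ ℤ) (g : G) :
    Matrix (Fin (n + 1)) (Fin (n + 1)) ℝ :=
  matOf (φ g) (π g)

lemma EMat_mem_of_psi_mem {W : Submodule ℝ (Matrix (Fin (n + 1)) (Fin (n + 1)) ℝ)}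
    {g h : G} {k : Fin n} {c : ℤ} (hc : c ≠ 0) (hφ : φ h = φ g)
    (hπ : π h = π g + Finsupp.single k c) (hg : psi φ π g ∈ W) (hh : psi φ π h ∈ W) :
    EMat n k ∈ W := by
  refine EMat_mem_of_matOf_mem hc hg ?_
  rwa [psi, hφ, hπ, Finsupp.coe_add, Finsupp.single_eq_pi_single] at hh

lemma span_range_psi_eq {ι : Type*} {T : Set G} (hT : SurjOn φ T (range φ)) {θ : ι → G}
    (hE : ∀ k, EMat n k ∈ span ℝ (range (fun x => psi φ π (θ x)) ∪ psi φ π '' T)) :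
    span ℝ (range (psi φ π)) = span ℝ (range (fun x => psi φ π (θ x)) ∪ psi φ π '' T) := by
  refine le_antisymm (span_le.mpr ?_) (span_mono ?_)
  · rintro _ ⟨g, rfl⟩
    obtain ⟨v, hvT, hvg⟩ := hT (mem_range_self g)
    have hv := subset_span (R := ℝ) (mem_union_right (range fun x => psi φ π (θ x))
      (mem_image_of_mem (psi φ π) hvT))
    rw [psi, hvg] at hv
    exact matOf_mem_of_EMat_mem hE hv (π g)
  · exact union_subset (range_comp_subset_range θ (psi φ π)) (image_subset_range _ T)

theorem span_image_psi_general (hπ : IsPermCocycle φ π) {gen : Fin n → G}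
    (hgen : ∀ x, π (gen x) = Finsupp.single x 1)
    {D : Fin n → Fin n} (hD : ∀ x, φ (gen x) (D x) = x)
    {m : ℕ} (hm : m ≠ 0) (hφm : ∀ x, φ (frozenElement gen D m x) = 1)
    {T : Set G} (hT1 : 1 ∈ T) (hT : BijOn φ T (range φ)) :
    span ℝ (range (psi φ π)) =
      span ℝ ((range fun x => psi φ π (frozenElement gen D m x)) ∪ psi φ π '' T) ∧
    FiniteDimensional ℝ (span ℝ (range (psi φ π))) ∧
    Module.finrank ℝ (span ℝ (range (psi φ π))) ≤ n + Nat.card (range φ) := by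
  have hspan := span_range_psi_eq (π := π) hT.surjOn (θ := frozenElement gen D m) fun k =>
    EMat_mem_of_psi_mem (g := 1) (h := frozenElement gen D m k) (Nat.cast_ne_zero.mpr hm)
      (by rw [hφm, map_one])
      (by rw [hπ.map_frozenElement hgen hD, hπ.map_one, zero_add])
      (subset_span (.inr ⟨1, hT1, rfl⟩)) (subset_span (.inl ⟨k, rfl⟩))
  have hTfin : T.Finite := hT.finite_iff_finite.mpr (toFinite _)
  have hTcard : T.ncard = Nat.card (range φ) := Nat.card_congr hT.equiv
  refine ⟨hspan, inferInstance, ?_⟩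
  rw [hspan, ← hTcard]
  simpa only [Nat.card_fin] using finrank_span_range_union_image_le (R := ℝ)
    (fun x => psi φ π (frozenElement gen D m x)) (psi φ π) hTfin

end Psi

/-- The real span of `{ψ(g) : g ∈ G(X,r)}` equals the span of
`{ψ(θ_k) : 1 ≤ k ≤ n} ∪ {ψ(v) : v ∈ T}`, where `T` is a set of coset representatives
of `Ker(φ)` containing `1`; in particular it is finite-dimensional of dimension at
most `n + |φ(G(X,r))|`. -/
theorem span_image_psi (n : ℕ) (S : YBSol (Fin n))
    (hnd : S.NonDeg) (hinv : S.Invol)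
    (φ : S.G →* Equiv.Perm (Fin n)) (hφ : ∀ x y : Fin n, φ (S.gen x) y = S.σ x y)
    (π : S.G → (Fin n →₀ ℤ)) (hπbij : Function.Bijective π)
    (hπgen : ∀ x : Fin n, π (S.gen x) = Finsupp.single x 1)
    (hπcoc : ∀ g h : S.G, π (g * h) = π g + Finsupp.mapDomain (⇑(φ g)) (π h))
    (D : Fin n → Fin n) (hD : ∀ x, S.σ x (D x) = x)
    (m : ℕ) (hm1 : 1 ≤ m) (hm : ∀ x y : Fin n, sigIter S D m x y = y)
    (θ : Fin n → S.G)
    (hθ : ∀ x : Fin n, θ x = (((List.range m).map fun i => S.gen (D^[i] x)).prod))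
    (M : S.G → Matrix (Fin (n + 1)) (Fin (n + 1)) ℝ)
    (hM : ∀ g : S.G, M g = matOf (φ g) (fun i => π g i))
    (T : Set S.G) (hT1 : (1 : S.G) ∈ T)
    (hT : ∀ g : S.G, ∃! v : S.G, v ∈ T ∧ φ v = φ g) :
    Submodule.span ℝ (Set.range M) =
      Submodule.span ℝ ((Set.range fun x : Fin n => M (θ x)) ∪ (M '' T)) ∧
    FiniteDimensional ℝ ↥(Submodule.span ℝ (Set.range M)) ∧
    Module.finrank ℝ ↥(Submodule.span ℝ (Set.range M)) ≤ n + Nat.card ↥φ.range := by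
  obtain rfl : M = psi φ π := funext hM
  obtain rfl : θ = frozenElement S.gen D m := funext hθ
  have hφθ (x : Fin n) : φ (frozenElement S.gen D m x) = 1 :=
    Equiv.ext fun y => by rw [coe_map_frozenElement_eq_sigIter S hφ, hm, Equiv.Perm.one_apply]
  exact span_image_psi_general hπcoc hπgen (fun x => (hφ x _).trans (hD x))
    (Nat.one_le_iff_ne_zero.mp hm1) hφθ hT1 (bijOn_range_of_existsUnique hT)
end
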